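/- Let n ≥ m ≥ 1 and let u, v ∈ A* satisfy u ⊳_{m+1,2n} v or u ⊲_{m+1,2n} v. Then the following three conditions hold: (WI1c) u and v agree on condensed rankers from uR_{m,n}; (WI2c) whenever r ∈ uR_{m,n} and r' ∈ uR_{m-1,n-1} are both condensed on u and on v, ord(r(u),r'(u)) = ord(r(v),r'(v)); (WI3c) whenever r ∈ uR_{m,n} and r' ∈ uR_{m,n-1} are both condensed on u and on v and end with different direction letters (one ends with an X-letter and the other with a Y-letter), ord(r(u),r'(u)) = ord(r(v),r'(v)). -/

import Mathlib

namespace RankerPaper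

variable {A : Type*} [DecidableEq A]

/-- Letters of rankers: `X a` ("next `a` to the right") and `Y a` ("next `a` to the left"). -/
inductive RLetter (A : Type*) where
  | X : A → RLetter A
  | Y : A → RLetter A
  deriving DecidableEq

/-- Least `a`-position of `u` strictly greater than `q` (positions are 1-indexed). -/
def nextOcc (u : List A) (a : A) (q : ℕ) : Option ℕ :=
  ((List.range (u.length + 2)).filter (fun i => decide (q < i ∧ u[i-1]? = some a))).head?

/-- Greatest `a`-position of `u` strictly less than `q` (positions are 1-indexed). -/
def prevOcc (u : List A) (a : A) (q : ℕ) : Option ℕ :=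
  ((List.range (u.length + 2)).filter
    (fun i => decide (1 ≤ i ∧ i < q ∧ u[i-1]? = some a))).getLast?

/-- One evaluation step of a ranker letter from position `q`. -/
def stepR (u : List A) : RLetter A → ℕ → Option ℕ
  | .X a, q => nextOcc u a q
  | .Y a, q => prevOcc u a q

/-- Evaluation of a ranker from position `q`, processing letters left to right. -/
def evalFrom (u : List A) : List (RLetter A) → ℕ → Option ℕ
  | [], q => some q
  | z :: r, q => (stepR u z q).bind (evalFrom u r)

/-- Starting position: `0` for an `X`-letter, `|u|+1` for a `Y`-letter. -/
def startPos (u : List A) : RLetter A → ℕ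
  | .X _ => 0
  | .Y _ => u.length + 1

/-- The position `r(u)` defined by the ranker `r` on `u` (`none` if undefined;
empty rankers are considered undefined, rankers being nonempty words). -/
def evalR (u : List A) (r : List (RLetter A)) : Option ℕ :=
  match r with
  | [] => none
  | z :: t => evalFrom u (z :: t) (startPos u z)

/-- `r` is defined on `u`. -/
def Defined (u : List A) (r : List (RLetter A)) : Prop := (evalR u r).isSome

/-- The position `r(u)` (defaulting to `0` when undefined). -/
def pos (u : List A) (r : List (RLetter A)) : ℕ := (evalR u r).getD 0

/-- Do two ranker letters have the same direction? -/
def sameDir : RLetter A → RLetter A → Bool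
  | .X _, .X _ => true
  | .Y _, .Y _ => true
  | _, _ => false

/-- Number of (alternating) blocks of a ranker. -/
def numBlocks : List (RLetter A) → ℕ
  | [] => 0
  | [_] => 1
  | z :: w :: t => (if sameDir z w then 0 else 1) + numBlocks (w :: t)

def startsX (r : List (RLetter A)) : Prop := ∃ a t, r = RLetter.X a :: t
def startsY (r : List (RLetter A)) : Prop := ∃ a t, r = RLetter.Y a :: t
def endsX (r : List (RLetter A)) : Prop := ∃ a, r.getLast? = some (RLetter.X a)
def endsY (r : List (RLetter A)) : Prop := ∃ a, r.getLast? = some (RLetter.Y a)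

/-- `R^X_{m,n}`: rankers with exactly `m` blocks, depth `n`, starting with an `X`-block. -/
def RX (m n : ℕ) (r : List (RLetter A)) : Prop :=
  numBlocks r = m ∧ r.length = n ∧ startsX r

/-- `R^Y_{m,n}`: rankers with exactly `m` blocks, depth `n`, starting with a `Y`-block. -/
def RY (m n : ℕ) (r : List (RLetter A)) : Prop :=
  numBlocks r = m ∧ r.length = n ∧ startsY r

/-- `uR^X_{m,n}`. -/
def uRX (m n : ℕ) (r : List (RLetter A)) : Prop :=
  (∃ m' n', m' ≤ m ∧ n' ≤ n ∧ RX m' n' r) ∨ (∃ m' n', m' < m ∧ n' < n ∧ RY m' n' r)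

/-- `uR^Y_{m,n}`. -/
def uRY (m n : ℕ) (r : List (RLetter A)) : Prop :=
  (∃ m' n', m' ≤ m ∧ n' ≤ n ∧ RY m' n' r) ∨ (∃ m' n', m' < m ∧ n' < n ∧ RX m' n' r)

/-- `uR_{m,n} = uR^X_{m,n} ∪ uR^Y_{m,n}`. -/
def uR (m n : ℕ) (r : List (RLetter A)) : Prop := uRX m n r ∨ uRY m n r

/-- `uR^X_m = ∪_{n ≥ m} uR^X_{m,n}`. -/
def uRXm (m : ℕ) (r : List (RLetter A)) : Prop := ∃ n, m ≤ n ∧ uRX m n r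

/-- `uR^Y_m = ∪_{n ≥ m} uR^Y_{m,n}`. -/
def uRYm (m : ℕ) (r : List (RLetter A)) : Prop := ∃ n, m ≤ n ∧ uRY m n r

/-- `r = Z₁ ⋯ Z_n` is condensed on `u`: it is defined on `u` and there is a chain of
open intervals `(0;|u|+1) = (i₀;j₀) ⊃ (i₁;j₁) ⊃ ⋯ ⊃ (i_{n-1};j_{n-1}) ∋ r(u)`
updated according to the pairs `Z_ℓ Z_{ℓ+1}`. -/
def Condensed (u : List A) (r : List (RLetter A)) : Prop :=
  ∃ (p : ℕ) (i j : ℕ → ℕ),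
    evalR u r = some p ∧
    i 0 = 0 ∧ j 0 = u.length + 1 ∧
    (∀ ℓ a b, 1 ≤ ℓ → r[ℓ-1]? = some (RLetter.X a) → r[ℓ]? = some (RLetter.X b) →
        nextOcc u a (i (ℓ-1)) = some (i ℓ) ∧ j ℓ = j (ℓ-1)) ∧
    (∀ ℓ a b, 1 ≤ ℓ → r[ℓ-1]? = some (RLetter.Y a) → r[ℓ]? = some (RLetter.Y b) →
        i ℓ = i (ℓ-1) ∧ prevOcc u a (j (ℓ-1)) = some (j ℓ)) ∧
    (∀ ℓ a b, 1 ≤ ℓ → r[ℓ-1]? = some (RLetter.X a) → r[ℓ]? = some (RLetter.Y b) →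
        i ℓ = i (ℓ-1) ∧ nextOcc u a (i (ℓ-1)) = some (j ℓ)) ∧
    (∀ ℓ a b, 1 ≤ ℓ → r[ℓ-1]? = some (RLetter.Y a) → r[ℓ]? = some (RLetter.X b) →
        prevOcc u a (j (ℓ-1)) = some (i ℓ) ∧ j ℓ = j (ℓ-1)) ∧
    (∀ ℓ, 1 ≤ ℓ → ℓ < r.length →
        i (ℓ-1) ≤ i ℓ ∧ j ℓ ≤ j (ℓ-1) ∧ (i (ℓ-1) < i ℓ ∨ j ℓ < j (ℓ-1))) ∧
    i (r.length - 1) < p ∧ p < j (r.length - 1)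

/-- `u` and `v` agree on rankers from the set `R`. -/
def AgreeDef (R : List (RLetter A) → Prop) (u v : List A) : Prop :=
  ∀ r, R r → (Defined u r ↔ Defined v r)

/-- `u` and `v` agree on condensed rankers from the set `R`. -/
def AgreeCond (R : List (RLetter A) → Prop) (u v : List A) : Prop :=
  ∀ r, R r → (Condensed u r ↔ Condensed v r)

/-- `u ⊳_{m,n} v`. -/
def trir (m n : ℕ) (u v : List A) : Prop := AgreeCond (uRX m n) u v

/-- `u ⊲_{m,n} v`. -/
def tril (m n : ℕ) (u v : List A) : Prop := AgreeCond (uRY m n) u v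

/-- The alphabet (set of letters) of a word. -/
def alph (u : List A) : Finset A := u.toFinset

/-- Condition (WI 1). -/
def WI1 (m n : ℕ) (u v : List A) : Prop := AgreeDef (uR m n) u v

/-- Condition (WI 2). -/
def WI2 (m n : ℕ) (u v : List A) : Prop :=
  ∀ r r', uR m n r → uR (m-1) (n-1) r' →
    Defined u r → Defined v r → Defined u r' → Defined v r' →
    compare (pos u r) (pos u r') = compare (pos v r) (pos v r')

/-- Condition (WI 3). -/
def WI3 (m n : ℕ) (u v : List A) : Prop :=
  ∀ r r', uR m n r → uR m (n-1) r' →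
    ((endsX r ∧ endsY r') ∨ (endsY r ∧ endsX r')) →
    Defined u r → Defined v r → Defined u r' → Defined v r' →
    compare (pos u r) (pos u r') = compare (pos v r) (pos v r')

/-- Condition (WI 1c). -/
def WI1c (m n : ℕ) (u v : List A) : Prop := AgreeCond (uR m n) u v

/-- Condition (WI 2c). -/
def WI2c (m n : ℕ) (u v : List A) : Prop :=
  ∀ r r', uR m n r → uR (m-1) (n-1) r' →
    Condensed u r → Condensed v r → Condensed u r' → Condensed v r' →
    compare (pos u r) (pos u r') = compare (pos v r) (pos v r')

/-- Condition (WI 3c). -/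
def WI3c (m n : ℕ) (u v : List A) : Prop :=
  ∀ r r', uR m n r → uR m (n-1) r' →
    ((endsX r ∧ endsY r') ∨ (endsY r ∧ endsX r')) →
    Condensed u r → Condensed v r → Condensed u r' → Condensed v r' →
    compare (pos u r) (pos u r') = compare (pos v r) (pos v r')

/-!
Evaluating a ranker inside an open interval of positions makes reversal of the word a symmetry which
exchanges `X` and `Y`, and hence `⊳` and `⊲`. To compare `r` and `s`, take the position reached by
the first letter of `r` as a pivot. Whether the same rankers are condensed on two words is inherited
by the parts to the left and to the right of the pivot at the cost of one letter of depth, and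
therefore `s` behaves in the same way with respect to the pivot on both words: it ends there, or one
of its suffixes is evaluated entirely on one side of it. In the only case that is not immediate, the
rest of `r` and that suffix of `s` are evaluated on the same side, and induction on the total depth
applies. Passing to the far side of the pivot may cost a block; if both rankers start in the same
direction and `r` makes the shorter first step, then neither can get there within its first block,
so that each of them has lost a block as well.
-/

section Rankers

variable {α : Type*}

/-- The letter of the alphabet carried by a ranker letter. -/
def RLetter.letter : RLetter α → α
  | .X a => a
  | .Y a => a

/-- The ranker letter with the opposite direction; mapping it over a ranker gives the ranker that
plays the same role on the reversed word. -/
def RLetter.flip : RLetter α → RLetter α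
  | .X a => .Y a
  | .Y a => .X a

theorem RLetter.flip_flip (z : RLetter α) : z.flip.flip = z := by cases z <;> rfl

theorem map_flip_map_flip (r : List (RLetter α)) :
    (r.map RLetter.flip).map RLetter.flip = r := by
  simp [Function.comp_def, RLetter.flip_flip]

theorem startsX_map_flip {r : List (RLetter α)} : startsX (r.map RLetter.flip) ↔ startsY r := by
  rcases r with _ | ⟨_ | _, t⟩ <;> simp [startsX, startsY, RLetter.flip]

theorem startsY_map_flip {r : List (RLetter α)} : startsY (r.map RLetter.flip) ↔ startsX r := by
  rcases r with _ | ⟨_ | _, t⟩ <;> simp [startsX, startsY, RLetter.flip]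

theorem endsX_map_flip {r : List (RLetter α)} : endsX (r.map RLetter.flip) ↔ endsY r := by
  rcases h : r.getLast? with _ | _ | _ <;> simp [endsX, endsY, RLetter.flip, h]

theorem endsY_map_flip {r : List (RLetter α)} : endsY (r.map RLetter.flip) ↔ endsX r := by
  rcases h : r.getLast? with _ | _ | _ <;> simp [endsX, endsY, RLetter.flip, h]

theorem eq_nil_or_startsX_or_startsY (r : List (RLetter α)) :
    r = [] ∨ startsX r ∨ startsY r := by
  rcases r with _ | ⟨_ | _, t⟩ <;> simp [startsX, startsY]

theorem startsX_cons_X (a : α) (t : List (RLetter α)) : startsX (.X a :: t) := ⟨a, t, rfl⟩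

theorem startsY_cons_Y (a : α) (t : List (RLetter α)) : startsY (.Y a :: t) := ⟨a, t, rfl⟩

theorem startsX.ne_nil {r : List (RLetter α)} (h : startsX r) : r ≠ [] := by
  obtain ⟨a, t, rfl⟩ := h; simp

theorem startsY.ne_nil {r : List (RLetter α)} (h : startsY r) : r ≠ [] := by
  obtain ⟨a, t, rfl⟩ := h; simp

theorem startsX.not_startsY {r : List (RLetter α)} (h : startsX r) : ¬startsY r := by
  obtain ⟨a, t, rfl⟩ := h; simp [startsY]

theorem numBlocks_map_flip : ∀ r : List (RLetter α), numBlocks (r.map RLetter.flip) = numBlocks r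
  | [] | [_] => rfl
  | z :: w :: t => by
    have ih := numBlocks_map_flip (w :: t)
    cases z <;> cases w <;> simpa [numBlocks, sameDir, RLetter.flip] using ih

theorem one_le_numBlocks : ∀ {r : List (RLetter α)}, r ≠ [] → 1 ≤ numBlocks r
  | [_], _ => le_rfl
  | _ :: w :: t, _ => (one_le_numBlocks (List.cons_ne_nil w t)).trans (Nat.le_add_left _ _)

theorem numBlocks_cons_X_of_startsX (a : α) {t : List (RLetter α)} (ht : startsX t) :
    numBlocks (.X a :: t) = numBlocks t := by
  obtain ⟨b, s, rfl⟩ := ht; simp [numBlocks, sameDir]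

theorem numBlocks_cons_X_of_startsY (a : α) {t : List (RLetter α)} (ht : startsY t) :
    numBlocks (.X a :: t) = numBlocks t + 1 := by
  obtain ⟨b, s, rfl⟩ := ht; simp [numBlocks, sameDir, add_comm]

theorem numBlocks_cons_Y_of_startsX (a : α) {t : List (RLetter α)} (ht : startsX t) :
    numBlocks (.Y a :: t) = numBlocks t + 1 := by
  obtain ⟨b, s, rfl⟩ := ht; simp [numBlocks, sameDir, add_comm]

theorem numBlocks_cons_Y_of_startsY (a : α) {t : List (RLetter α)} (ht : startsY t) :
    numBlocks (.Y a :: t) = numBlocks t := by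
  obtain ⟨b, s, rfl⟩ := ht; simp [numBlocks, sameDir]

theorem numBlocks_le_of_suffix {s r : List (RLetter α)} (h : s <:+ r) :
    numBlocks s ≤ numBlocks r := by
  obtain ⟨l, rfl⟩ := h
  induction l with
  | nil => exact le_rfl
  | cons z l ih =>
    refine ih.trans ?_
    rcases h : l ++ s with _ | ⟨w, t⟩
    · exact Nat.zero_le _
    · simp only [List.cons_append, h, numBlocks, Nat.le_add_left]

theorem numBlocks_lt_of_suffix_of_startsX {s : List (RLetter α)} (hs : startsX s) :
    ∀ {r : List (RLetter α)}, startsY r → s <:+ r → numBlocks s < numBlocks r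
  | _, ⟨a, t, rfl⟩, h => by
    rcases List.suffix_cons_iff.1 h with rfl | h
    · exact absurd (startsY_cons_Y a t) hs.not_startsY
    rcases eq_nil_or_startsX_or_startsY t with rfl | ht | ht
    · exact absurd (List.suffix_nil.1 h) hs.ne_nil
    · rw [numBlocks_cons_Y_of_startsX a ht]
      exact Nat.lt_succ_of_le (numBlocks_le_of_suffix h)
    · rw [numBlocks_cons_Y_of_startsY a ht]
      exact numBlocks_lt_of_suffix_of_startsX hs ht h

theorem endsY_of_startsY_of_numBlocks_le_one :
    ∀ {r : List (RLetter α)}, startsY r → numBlocks r ≤ 1 → endsY r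
  | _, ⟨a, t, rfl⟩, h => by
    rcases eq_nil_or_startsX_or_startsY t with rfl | ht | ht
    · exact ⟨a, rfl⟩
    · have := one_le_numBlocks ht.ne_nil
      rw [numBlocks_cons_Y_of_startsX a ht] at h
      omega
    · rw [numBlocks_cons_Y_of_startsY a ht] at h
      obtain ⟨b, hb⟩ := endsY_of_startsY_of_numBlocks_le_one ht h
      exact ⟨b, by rw [List.getLast?_cons, hb]; rfl⟩

theorem endsX.not_endsY {r : List (RLetter α)} : endsX r → ¬endsY r := by
  rintro ⟨a, ha⟩ ⟨b, hb⟩; simp [ha] at hb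

theorem endsX_congr_of_suffix {s r : List (RLetter α)} (h : s <:+ r) (hs : s ≠ []) :
    endsX s ↔ endsX r := by
  obtain ⟨l, rfl⟩ := h
  rw [endsX, endsX, List.getLast?_append_of_ne_nil l hs]

theorem endsY_congr_of_suffix {s r : List (RLetter α)} (h : s <:+ r) (hs : s ≠ []) :
    endsY s ↔ endsY r := by
  obtain ⟨l, rfl⟩ := h
  rw [endsY, endsY, List.getLast?_append_of_ne_nil l hs]

/-- The rankers of depth at most `k` with at most `b` blocks if they start with an `X`-letter and
at most `c` blocks if they start with a `Y`-letter. Thus `boundedRankers (m + 1) m k` lies between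
the paper's `uR^X_{m+1,k}` and `uR^X_{m+1,k+1}`. -/
def boundedRankers (b c k : ℕ) : Set (List (RLetter α)) :=
  {r | r.length ≤ k ∧ (startsX r ∧ numBlocks r ≤ b ∨ startsY r ∧ numBlocks r ≤ c)}

section boundedRankers

variable {b b' c c' k k' : ℕ} {r t : List (RLetter α)}

theorem boundedRankers_mono (hb : b ≤ b') (hc : c ≤ c') (hk : k ≤ k') :
    (boundedRankers b c k : Set (List (RLetter α))) ⊆ boundedRankers b' c' k' := by
  rintro r ⟨hrk, h | h⟩
  · exact ⟨hrk.trans hk, .inl ⟨h.1, h.2.trans hb⟩⟩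
  · exact ⟨hrk.trans hk, .inr ⟨h.1, h.2.trans hc⟩⟩

theorem map_flip_mem_boundedRankers :
    r.map RLetter.flip ∈ boundedRankers b c k ↔ r ∈ boundedRankers c b k := by
  simp only [boundedRankers, Set.mem_ofPred_eq, List.length_map, startsX_map_flip,
    startsY_map_flip, numBlocks_map_flip, or_comm]

theorem mem_boundedRankers_of_startsX (ht : startsX t) :
    t ∈ boundedRankers b c k ↔ t.length ≤ k ∧ numBlocks t ≤ b := by
  simp [boundedRankers, ht, ht.not_startsY]

theorem mem_boundedRankers_of_startsY (ht : startsY t) :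
    t ∈ boundedRankers b c k ↔ t.length ≤ k ∧ numBlocks t ≤ c := by
  have hX : ¬startsX t := fun h ↦ h.not_startsY ht
  simp [boundedRankers, ht, hX]

theorem mem_boundedRankers_self (hr : r ≠ []) (hk : r.length ≤ k) (hb : numBlocks r ≤ b) :
    r ∈ boundedRankers b b k :=
  ⟨hk, ((eq_nil_or_startsX_or_startsY r).resolve_left hr).imp (⟨·, hb⟩) (⟨·, hb⟩)⟩

theorem mem_boundedRankers_zero_right :
    r ∈ boundedRankers b 0 k ↔ startsX r ∧ r.length ≤ k ∧ numBlocks r ≤ b := by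
  have h : startsY r → 1 ≤ numBlocks r := fun h ↦ one_le_numBlocks h.ne_nil
  simp only [boundedRankers, Set.mem_ofPred_eq]
  grind

theorem cons_X_mem_boundedRankers_of_startsX (a : α) (ht : startsX t) :
    .X a :: t ∈ boundedRankers b c (k + 1) ↔ t ∈ boundedRankers b c k := by
  simp [mem_boundedRankers_of_startsX, startsX_cons_X, ht, numBlocks_cons_X_of_startsX]

theorem cons_X_mem_boundedRankers_of_startsY (a : α) (ht : startsY t) :
    .X a :: t ∈ boundedRankers (b + 1) c (k + 1) ↔ t ∈ boundedRankers b' b k := by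
  simp [mem_boundedRankers_of_startsX, mem_boundedRankers_of_startsY, startsX_cons_X, ht,
    numBlocks_cons_X_of_startsY]

theorem X_mem_boundedRankers (a : α) : [.X a] ∈ boundedRankers (b + 1) c (k + 1) := by
  simp [mem_boundedRankers_of_startsX, startsX_cons_X, numBlocks]

theorem mem_boundedRankers_of_cons {z : RLetter α} (hb : b ≤ c + 1) (hc : c ≤ b + 1) (ht : t ≠ [])
    (h : z :: t ∈ boundedRankers b c (k + 1)) : t ∈ boundedRankers b c k := by
  rcases eq_nil_or_startsX_or_startsY t with rfl | hX | hY
  · exact absurd rfl ht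
  · rw [mem_boundedRankers_of_startsX hX]
    cases z <;> simp [mem_boundedRankers_of_startsX, mem_boundedRankers_of_startsY,
      startsX_cons_X, startsY_cons_Y, numBlocks_cons_X_of_startsX, numBlocks_cons_Y_of_startsX,
      hX] at h <;> omega
  · rw [mem_boundedRankers_of_startsY hY]
    cases z <;> simp [mem_boundedRankers_of_startsX, mem_boundedRankers_of_startsY,
      startsX_cons_X, startsY_cons_Y, numBlocks_cons_X_of_startsY, numBlocks_cons_Y_of_startsY,
      hY] at h <;> omega

theorem uR.mem_boundedRankers {m n : ℕ} (h : uR m n r) : r ∈ boundedRankers m m n := by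
  rcases h with (⟨_, _, hm, hn, rfl, rfl, hr⟩ | ⟨_, _, hm, hn, rfl, rfl, hr⟩) |
    (⟨_, _, hm, hn, rfl, rfl, hr⟩ | ⟨_, _, hm, hn, rfl, rfl, hr⟩)
  · exact mem_boundedRankers_self hr.ne_nil hn hm
  · exact mem_boundedRankers_self hr.ne_nil hn.le hm.le
  · exact mem_boundedRankers_self hr.ne_nil hn hm
  · exact mem_boundedRankers_self hr.ne_nil hn.le hm.le

theorem uR.numBlocks_le {m n : ℕ} (h : uR m n r) : numBlocks r ≤ m :=
  h.mem_boundedRankers.2.elim And.right And.right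

theorem uRX_of_mem_boundedRankers (h : r ∈ boundedRankers (b + 1) b k) :
    uRX (b + 1) (k + 1) r :=
  h.2.imp (fun hr ↦ ⟨_, _, hr.2, h.1.trans k.le_succ, rfl, rfl, hr.1⟩)
    fun hr ↦ ⟨_, _, Nat.lt_succ_of_le hr.2, Nat.lt_succ_of_le h.1, rfl, rfl, hr.1⟩

theorem uRY_of_mem_boundedRankers (h : r ∈ boundedRankers b (b + 1) k) :
    uRY (b + 1) (k + 1) r :=
  h.2.symm.imp (fun hr ↦ ⟨_, _, hr.2, h.1.trans k.le_succ, rfl, rfl, hr.1⟩)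
    fun hr ↦ ⟨_, _, Nat.lt_succ_of_le hr.2, Nat.lt_succ_of_le h.1, rfl, rfl, hr.1⟩

end boundedRankers

end Rankers

section Reaches

open OrderDual Set

variable {α T : Type*} [LinearOrder T] {w : T → Option α} {i j k l x y p : T} {a : α}
  {z : RLetter α} {r t : List (RLetter α)}

/-- The positions of the letter `a` inside the open interval `(i, j)`. -/
def occ (w : T → Option α) (i j : T) (a : α) : Set T := {x | x ∈ Ioo i j ∧ w x = some a}

/-- `IsStep w i j z x` means that the ranker letter `z`, evaluated inside the open interval
`(i, j)`, leads to `x`: from the left end for an `X`-letter, from the right end for a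
`Y`-letter. -/
def IsStep (w : T → Option α) (i j : T) : RLetter α → T → Prop
  | .X a, x => IsLeast (occ w i j a) x
  | .Y a, x => IsGreatest (occ w i j a) x

theorem IsStep.mem_occ (h : IsStep w i j z x) : x ∈ occ w i j z.letter := by
  cases z <;> exact h.1

theorem IsStep.mem_Ioo (h : IsStep w i j z x) : x ∈ Ioo i j := h.mem_occ.1

theorem IsStep.unique (h : IsStep w i j z x) (h' : IsStep w i j z y) : x = y := by
  cases z
  · exact IsLeast.unique h h'
  · exact IsGreatest.unique h h'

theorem isStep_dual :
    IsStep (w ∘ ofDual) (toDual j) (toDual i) z.flip (toDual x) ↔ IsStep w i j z x := by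
  cases z <;>
  · simp only [IsStep, RLetter.flip, IsLeast, IsGreatest, occ, mem_ofPred_eq, Function.comp_apply,
      ofDual_toDual, mem_lowerBounds, mem_upperBounds, mem_Ioo, OrderDual.forall, toDual_lt_toDual,
      toDual_le_toDual, and_comm]

theorem exists_isStep [LocallyFiniteOrder T] (h : (occ w i j z.letter).Nonempty) :
    ∃ x, IsStep w i j z x := by
  have hfin : (occ w i j z.letter).Finite := (finite_Ioo i j).subset fun _ hx ↦ hx.1
  cases z
  · exact (hfin.exists_minimal h).imp fun _ ↦ minimal_iff_isLeast.1
  · exact (hfin.exists_maximal h).imp fun _ ↦ maximal_iff_isGreatest.1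

theorem IsStep.restrict_left (h : IsStep w i j z x) (hik : i ≤ k) (hkx : k < x) :
    IsStep w k j z x := by
  have hsub : occ w k j z.letter ⊆ occ w i j z.letter :=
    fun y hy ↦ ⟨⟨hik.trans_lt hy.1.1, hy.1.2⟩, hy.2⟩
  have hx : x ∈ occ w k j z.letter := ⟨⟨hkx, h.mem_Ioo.2⟩, h.mem_occ.2⟩
  cases z
  · exact ⟨hx, fun y hy ↦ h.2 (hsub hy)⟩
  · exact ⟨hx, fun y hy ↦ h.2 (hsub hy)⟩

theorem IsStep.restrict_right (h : IsStep w i j z x) (hlj : l ≤ j) (hxl : x < l) :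
    IsStep w i l z x :=
  isStep_dual.1 (isStep_dual.2 h |>.restrict_left (toDual_le_toDual.2 hlj) (toDual_lt_toDual.2 hxl))

theorem IsStep.extend_left (h : IsStep w i j (.Y a) x) (hli : l ≤ i) : IsStep w l j (.Y a) x :=
  ⟨⟨⟨hli.trans_lt h.mem_Ioo.1, h.mem_Ioo.2⟩, h.mem_occ.2⟩, fun y hy ↦
    (lt_or_ge i y).elim (fun hiy ↦ h.2 ⟨⟨hiy, hy.1.2⟩, hy.2⟩) (·.trans h.mem_Ioo.1.le)⟩

theorem IsStep.extend_right (h : IsStep w i j (.X a) x) (hjl : j ≤ l) : IsStep w i l (.X a) x :=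
  isStep_dual.1 ((isStep_dual.2 h).extend_left (toDual_le_toDual.2 hjl))

/-- `Reaches w r i j p` means that the ranker `r` is condensed on the factor of `w` strictly
between `i` and `j` and leads to `p`: each letter narrows the current interval to the side on
which the ranker continues. -/
inductive Reaches (w : T → Option α) : List (RLetter α) → T → T → T → Prop
  | single {z : RLetter α} {i j p : T} (h : IsStep w i j z p) : Reaches w [z] i j p
  | right {z : RLetter α} {t : List (RLetter α)} {i j x p : T} (hx : IsStep w i j z x)
      (ht : startsX t) (h : Reaches w t x j p) : Reaches w (z :: t) i j p
  | left {z : RLetter α} {t : List (RLetter α)} {i j x p : T} (hx : IsStep w i j z x)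
      (ht : startsY t) (h : Reaches w t i x p) : Reaches w (z :: t) i j p

theorem Reaches.ne_nil (h : Reaches w r i j p) : r ≠ [] := by cases h <;> simp

theorem Reaches.mem_Ioo (h : Reaches w r i j p) : p ∈ Ioo i j := by
  induction h with
  | single h => exact h.mem_Ioo
  | right hx _ _ ih => exact ⟨hx.mem_Ioo.1.trans ih.1, ih.2⟩
  | left hx _ _ ih => exact ⟨ih.1, ih.2.trans hx.mem_Ioo.2⟩

theorem Reaches.exists_isStep (h : Reaches w (z :: t) i j p) : ∃ x, IsStep w i j z x := by
  cases h with
  | single h | right h _ _ | left h _ _ => exact ⟨_, h⟩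

theorem reaches_singleton_iff : Reaches w [z] i j p ↔ IsStep w i j z p := by
  refine ⟨fun h ↦ ?_, .single⟩
  cases h with
  | single h => exact h
  | right _ ht _ => exact absurd rfl ht.ne_nil
  | left _ ht _ => exact absurd rfl ht.ne_nil

theorem IsStep.reaches_cons_iff_of_startsX (hx : IsStep w i j z x) (ht : startsX t) :
    Reaches w (z :: t) i j p ↔ Reaches w t x j p := by
  refine ⟨fun h ↦ ?_, .right hx ht⟩
  cases h with
  | single => exact absurd rfl ht.ne_nil
  | right hy _ h => rwa [hx.unique hy]
  | left _ ht' _ => exact absurd ht' ht.not_startsY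

theorem IsStep.reaches_cons_iff_of_startsY (hx : IsStep w i j z x) (ht : startsY t) :
    Reaches w (z :: t) i j p ↔ Reaches w t i x p := by
  refine ⟨fun h ↦ ?_, .left hx ht⟩
  cases h with
  | single => exact absurd rfl ht.ne_nil
  | right _ ht' _ => exact absurd ht ht'.not_startsY
  | left hy _ h => rwa [hx.unique hy]

theorem Reaches.dual (h : Reaches w r i j p) :
    Reaches (w ∘ ofDual) (r.map RLetter.flip) (toDual j) (toDual i) (toDual p) := by
  induction h with
  | single h => exact .single (isStep_dual.2 h)
  | right hx ht _ ih => exact .left (isStep_dual.2 hx) (startsY_map_flip.2 ht) ih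
  | left hx ht _ ih => exact .right (isStep_dual.2 hx) (startsX_map_flip.2 ht) ih

theorem reaches_dual :
    Reaches (w ∘ ofDual) (r.map RLetter.flip) (toDual j) (toDual i) (toDual p) ↔
      Reaches w r i j p := by
  refine ⟨fun h ↦ ?_, .dual⟩
  have := h.dual
  rwa [map_flip_map_flip] at this

theorem Reaches.extend_left (hr : startsY r) (h : Reaches w r i j p) (hli : l ≤ i) :
    Reaches w r l j p := by
  induction h with
  | single h =>
    obtain ⟨a, _, ⟨⟩⟩ := hr
    exact .single (h.extend_left hli)
  | right hx ht h =>
    obtain ⟨a, _, ⟨⟩⟩ := hr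
    exact .right (hx.extend_left hli) ht h
  | left hx ht _ ih =>
    obtain ⟨a, _, ⟨⟩⟩ := hr
    exact .left (hx.extend_left hli) ht (ih ht hli)

theorem Reaches.restrict_right (h : Reaches w (z :: t) i j p) (ht : ¬startsX t)
    (hx : IsStep w i j z x) (hxl : x < l) (hlj : l ≤ j) : Reaches w (z :: t) i l p := by
  cases h with
  | single h => exact .single (h.restrict_right hlj (h.unique hx ▸ hxl))
  | right _ ht' _ => exact absurd ht' ht
  | left hy ht h => exact .left (hy.restrict_right hlj (hy.unique hx ▸ hxl)) ht h

end Reaches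

section Agreement

open OrderDual Set

variable {α S T : Type*} [LinearOrder S] [LinearOrder T] {u : S → Option α} {v w : T → Option α}
  {i j x p : S} {i' j' x' p' : T} {a d : α} {z : RLetter α} {r t : List (RLetter α)}
  {R R' : Set (List (RLetter α))} {b c k : ℕ}

/-- The ranker `r` is condensed on the factor of `w` strictly between `i` and `j`. -/
def CondensedIn (w : T → Option α) (r : List (RLetter α)) (i j : T) : Prop :=
  ∃ p, Reaches w r i j p

theorem condensedIn_dual {i j : T} :
    CondensedIn (w ∘ ofDual) (r.map RLetter.flip) (toDual j) (toDual i) ↔ CondensedIn w r i j :=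
  ⟨fun ⟨p, hp⟩ ↦ ⟨ofDual p, reaches_dual.1 hp⟩, fun ⟨p, hp⟩ ↦ ⟨toDual p, hp.dual⟩⟩

theorem IsStep.condensedIn_cons_iff_of_startsX (hx : IsStep u i j z x) (ht : startsX t) :
    CondensedIn u (z :: t) i j ↔ CondensedIn u t x j :=
  exists_congr fun _ ↦ hx.reaches_cons_iff_of_startsX ht

theorem IsStep.condensedIn_cons_iff_of_startsY (hx : IsStep u i j z x) (ht : startsY t) :
    CondensedIn u (z :: t) i j ↔ CondensedIn u t i x :=
  exists_congr fun _ ↦ hx.reaches_cons_iff_of_startsY ht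

theorem IsStep.condensedIn_singleton (hx : IsStep u i j z x) : CondensedIn u [z] i j :=
  ⟨x, .single hx⟩

theorem CondensedIn.exists_isStep (h : CondensedIn u (z :: t) i j) : ∃ x, IsStep u i j z x :=
  h.choose_spec.exists_isStep

theorem CondensedIn.occ_nonempty (h : CondensedIn u (z :: t) i j) :
    (occ u i j z.letter).Nonempty :=
  h.exists_isStep.imp fun _ ↦ IsStep.mem_occ

theorem condensedIn_singleton_iff [LocallyFiniteOrder S] :
    CondensedIn u [z] i j ↔ (occ u i j z.letter).Nonempty :=
  ⟨CondensedIn.occ_nonempty, fun h ↦ (exists_isStep h).choose_spec.condensedIn_singleton⟩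

theorem IsStep.occ_left_nonempty_iff_of_X [LocallyFiniteOrder S] (hx : IsStep u i j (.X a) x) :
    (occ u i x d).Nonempty ↔ CondensedIn u [.X a, .Y d] i j := by
  rw [hx.condensedIn_cons_iff_of_startsY (startsY_cons_Y d []), condensedIn_singleton_iff]
  rfl

theorem IsStep.occ_left_nonempty_iff_of_Y [LocallyFiniteOrder S] (hx : IsStep u i j (.Y a) x) :
    (occ u i x d).Nonempty ↔ CondensedIn u [.X d, .X a] i j := by
  constructor
  · intro hd
    obtain ⟨y, hy : IsStep u i x (.X d) y⟩ := exists_isStep (z := .X d) hd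
    rw [(hy.extend_right hx.mem_Ioo.2.le).condensedIn_cons_iff_of_startsX (startsX_cons_X a []),
      condensedIn_singleton_iff]
    exact ⟨x, ⟨hy.mem_Ioo.2, hx.mem_Ioo.2⟩, hx.mem_occ.2⟩
  · intro h
    obtain ⟨y, hy⟩ := h.exists_isStep
    rw [hy.condensedIn_cons_iff_of_startsX (startsX_cons_X a []), condensedIn_singleton_iff] at h
    obtain ⟨q, ⟨hyq, hqj⟩, hq⟩ := h
    have hqx : q ≤ x := hx.2 ⟨⟨hy.mem_Ioo.1.trans hyq, hqj⟩, hq⟩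
    exact ⟨y, ⟨hy.mem_Ioo.1, hyq.trans_le hqx⟩, hy.mem_occ.2⟩

/-- The same rankers from `R` are condensed on the factor of `u` strictly between `i` and `j` and
on the factor of `v` strictly between `i'` and `j'`. -/
def AgreeOn (R : Set (List (RLetter α))) (u : S → Option α) (i j : S) (v : T → Option α)
    (i' j' : T) : Prop :=
  ∀ r ∈ R, CondensedIn u r i j ↔ CondensedIn v r i' j'

theorem AgreeOn.mono (h : AgreeOn R u i j v i' j') (hR : R' ⊆ R) : AgreeOn R' u i j v i' j' :=
  fun r hr ↦ h r (hR hr)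

theorem AgreeOn.dual (h : AgreeOn (boundedRankers b c k) u i j v i' j') :
    AgreeOn (boundedRankers c b k) (u ∘ ofDual) (toDual j) (toDual i) (v ∘ ofDual) (toDual j')
      (toDual i') := by
  intro r hr
  rw [← map_flip_map_flip r, condensedIn_dual, condensedIn_dual]
  exact h _ (map_flip_mem_boundedRankers.2 hr)

theorem agreeOn_dual :
    AgreeOn (boundedRankers c b k) (u ∘ ofDual) (toDual j) (toDual i) (v ∘ ofDual) (toDual j')
      (toDual i') ↔ AgreeOn (boundedRankers b c k) u i j v i' j' :=
  ⟨fun h ↦ h.dual, fun h ↦ h.dual⟩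

theorem agreeOn_boundedRankers_iff :
    AgreeOn (boundedRankers b c k) u i j v i' j' ↔
      AgreeOn (boundedRankers b 0 k) u i j v i' j' ∧
        AgreeOn (boundedRankers 0 c k) u i j v i' j' := by
  refine ⟨fun h ↦ ⟨h.mono (boundedRankers_mono le_rfl c.zero_le le_rfl),
    h.mono (boundedRankers_mono b.zero_le le_rfl le_rfl)⟩, ?_⟩
  rintro ⟨hX, hY⟩ r ⟨hr, h | h⟩
  · exact hX r ⟨hr, .inl h⟩
  · exact hY r ⟨hr, .inr h⟩

theorem AgreeOn.startsX_right_of_X (h : AgreeOn (boundedRankers b c (k + 1)) u i j v i' j')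
    (hx : IsStep u i j (.X a) x) (hx' : IsStep v i' j' (.X a) x') :
    AgreeOn (boundedRankers b 0 k) u x j v x' j' := by
  intro t ht
  have htX := (mem_boundedRankers_zero_right.1 ht).1
  rw [← hx.condensedIn_cons_iff_of_startsX htX, ← hx'.condensedIn_cons_iff_of_startsX htX]
  exact h _ ((cons_X_mem_boundedRankers_of_startsX a htX).2
    (boundedRankers_mono le_rfl c.zero_le le_rfl ht))

theorem AgreeOn.startsY_left_of_X (h : AgreeOn (boundedRankers (b + 1) c (k + 1)) u i j v i' j')
    (hx : IsStep u i j (.X a) x) (hx' : IsStep v i' j' (.X a) x') :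
    AgreeOn (boundedRankers 0 b k) u i x v i' x' := by
  intro t ht
  have htY : startsY t := startsX_map_flip.1
    (mem_boundedRankers_zero_right.1 (map_flip_mem_boundedRankers.2 ht)).1
  rw [← hx.condensedIn_cons_iff_of_startsY htY, ← hx'.condensedIn_cons_iff_of_startsY htY]
  exact h _ ((cons_X_mem_boundedRankers_of_startsY a htY).2 ht)

section LocallyFinite

variable [LocallyFiniteOrder S] [LocallyFiniteOrder T]

/- Whether `d` occurs to the left of the last `a` is decided by the ranker `X_d X_a`, whether it
occurs to the left of the first `a` by the ranker `X_a Y_d`. -/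
theorem AgreeOn.occ_left_nonempty_iff (hz : (∃ a, z = .Y a) ∨ 2 ≤ b) (hb : 1 ≤ b)
    (h : AgreeOn (boundedRankers b 0 2) u i j v i' j')
    (hx : IsStep u i j z x) (hx' : IsStep v i' j' z x') :
    (occ u i x d).Nonempty ↔ (occ v i' x' d).Nonempty := by
  cases z with
  | X a =>
    rw [hx.occ_left_nonempty_iff_of_X, hx'.occ_left_nonempty_iff_of_X]
    refine h _ ⟨le_rfl, .inl ⟨startsX_cons_X _ _, ?_⟩⟩
    simpa [numBlocks, sameDir] using hz
  | Y a =>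
    rw [hx.occ_left_nonempty_iff_of_Y, hx'.occ_left_nonempty_iff_of_Y]
    refine h _ ⟨le_rfl, .inl ⟨startsX_cons_X _ _, ?_⟩⟩
    simpa [numBlocks, sameDir] using hb

theorem AgreeOn.startsX_left_of_isStep (hz : (∃ a, z = .Y a) ∨ 2 ≤ b)
    (h : AgreeOn (boundedRankers b c (k + 1)) u i j v i' j')
    (hx : IsStep u i j z x) (hx' : IsStep v i' j' z x') :
    AgreeOn (boundedRankers b 0 k) u i x v i' x' := by
  replace h := (agreeOn_boundedRankers_iff.1 h).1
  induction k generalizing i i' with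
  | zero =>
    intro r hr
    obtain ⟨⟨d, t, rfl⟩, hk, -⟩ := mem_boundedRankers_zero_right.1 hr
    simp at hk
  | succ k ih =>
    intro r hr
    obtain ⟨⟨d, t, rfl⟩, -, hrb⟩ := mem_boundedRankers_zero_right.1 hr
    have hocc : (occ u i x d).Nonempty ↔ (occ v i' x' d).Nonempty :=
      (h.mono (boundedRankers_mono le_rfl le_rfl (by omega))).occ_left_nonempty_iff hz
        ((one_le_numBlocks (List.cons_ne_nil _ _)).trans hrb) hx hx'
    by_cases hd : (occ u i x d).Nonempty
    · obtain ⟨y, hy : IsStep u i x (.X d) y⟩ := exists_isStep (z := .X d) hd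
      obtain ⟨y', hy' : IsStep v i' x' (.X d) y'⟩ := exists_isStep (z := .X d) (hocc.1 hd)
      have hyj := hy.extend_right hx.mem_Ioo.2.le
      have hyj' := hy'.extend_right hx'.mem_Ioo.2.le
      rcases eq_nil_or_startsX_or_startsY t with rfl | ht | ht
      · exact iff_of_true hy.condensedIn_singleton hy'.condensedIn_singleton
      · rw [hy.condensedIn_cons_iff_of_startsX ht, hy'.condensedIn_cons_iff_of_startsX ht]
        exact ih (hx.restrict_left hy.mem_Ioo.1.le hy.mem_Ioo.2)
          (hx'.restrict_left hy'.mem_Ioo.1.le hy'.mem_Ioo.2) (h.startsX_right_of_X hyj hyj') t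
          ((cons_X_mem_boundedRankers_of_startsX d ht).1 hr)
      · rw [hy.condensedIn_cons_iff_of_startsY ht, hy'.condensedIn_cons_iff_of_startsY ht,
          ← hyj.condensedIn_cons_iff_of_startsY ht, ← hyj'.condensedIn_cons_iff_of_startsY ht]
        exact h _ (boundedRankers_mono le_rfl le_rfl (k + 1).le_succ hr)
    · exact iff_of_false (fun h ↦ hd h.occ_nonempty) (fun h ↦ hd (hocc.2 h.occ_nonempty))

theorem AgreeOn.startsY_right_of_isStep (hz : (∃ a, z = .X a) ∨ 2 ≤ c)
    (h : AgreeOn (boundedRankers b c (k + 1)) u i j v i' j')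
    (hx : IsStep u i j z x) (hx' : IsStep v i' j' z x') :
    AgreeOn (boundedRankers 0 c k) u x j v x' j' :=
  agreeOn_dual.1 (h.dual.startsX_left_of_isStep (hz.imp_left fun ⟨a, hz⟩ ↦ ⟨a, hz ▸ rfl⟩)
    (isStep_dual.2 hx) (isStep_dual.2 hx'))

theorem AgreeOn.right_of_X (h : AgreeOn (boundedRankers b c (k + 1)) u i j v i' j')
    (hx : IsStep u i j (.X a) x) (hx' : IsStep v i' j' (.X a) x') :
    AgreeOn (boundedRankers b c k) u x j v x' j' :=
  agreeOn_boundedRankers_iff.2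
    ⟨h.startsX_right_of_X hx hx', h.startsY_right_of_isStep (.inl ⟨a, rfl⟩) hx hx'⟩

theorem AgreeOn.left_of_X (hb : 1 ≤ b)
    (h : AgreeOn (boundedRankers (b + 1) c (k + 1)) u i j v i' j')
    (hx : IsStep u i j (.X a) x) (hx' : IsStep v i' j' (.X a) x') :
    AgreeOn (boundedRankers (b + 1) b k) u i x v i' x' :=
  agreeOn_boundedRankers_iff.2
    ⟨h.startsX_left_of_isStep (.inr (Nat.succ_le_succ hb)) hx hx', h.startsY_left_of_X hx hx'⟩

theorem AgreeOn.left_of_Y (h : AgreeOn (boundedRankers b c (k + 1)) u i j v i' j')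
    (hx : IsStep u i j (.Y a) x) (hx' : IsStep v i' j' (.Y a) x') :
    AgreeOn (boundedRankers b c k) u i x v i' x' :=
  agreeOn_dual.1 (h.dual.right_of_X (a := a) (isStep_dual.2 hx) (isStep_dual.2 hx'))

theorem AgreeOn.right_of_Y (hc : 1 ≤ c)
    (h : AgreeOn (boundedRankers b (c + 1) (k + 1)) u i j v i' j')
    (hx : IsStep u i j (.Y a) x) (hx' : IsStep v i' j' (.Y a) x') :
    AgreeOn (boundedRankers c (c + 1) k) u x j v x' j' :=
  agreeOn_dual.1 (h.dual.left_of_X (a := a) hc (isStep_dual.2 hx) (isStep_dual.2 hx'))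

end LocallyFinite

variable {q : S} {q' : T}

theorem IsStep.lt_iff_of_X (hx : IsStep u i j (.X a) x) (hq : q ∈ Ioo i j) :
    x < q ↔ (occ u i q a).Nonempty :=
  ⟨fun h ↦ ⟨x, ⟨hx.mem_Ioo.1, h⟩, hx.mem_occ.2⟩,
    fun ⟨_, hy, hya⟩ ↦ (hx.2 ⟨⟨hy.1, hy.2.trans hq.2⟩, hya⟩).trans_lt hy.2⟩

theorem IsStep.eq_iff_of_X (hx : IsStep u i j (.X a) x) (hq : q ∈ Ioo i j) (hqx : q ≤ x) :
    x = q ↔ u q = some a :=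
  ⟨fun h ↦ h ▸ hx.mem_occ.2, fun h ↦ (hx.2 ⟨hq, h⟩).antisymm hqx⟩

theorem IsStep.cmp_eq_cmp_of_X (hq : q ∈ Ioo i j) (hq' : q' ∈ Ioo i' j') (huv : u q = v q')
    (hocc : (occ u i q a).Nonempty ↔ (occ v i' q' a).Nonempty)
    (hx : IsStep u i j (.X a) x) (hx' : IsStep v i' j' (.X a) x') : cmp x q = cmp x' q' := by
  have hlt : x < q ↔ x' < q' := by rw [hx.lt_iff_of_X hq, hocc, hx'.lt_iff_of_X hq']
  rcases lt_or_ge x q with h | h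
  · rw [h.cmp_eq_lt, (hlt.1 h).cmp_eq_lt]
  have h' : q' ≤ x' := not_lt.1 (mt hlt.2 h.not_gt)
  have heq : q = x ↔ q' = x' := by
    rw [eq_comm, hx.eq_iff_of_X hq h, huv, ← hx'.eq_iff_of_X hq' h', eq_comm]
  rcases h.eq_or_lt with h | h
  · rw [h.cmp_eq_eq', (heq.1 h).cmp_eq_eq']
  · rw [h.cmp_eq_gt, (h'.lt_of_ne (mt heq.2 h.ne)).cmp_eq_gt]

/-- The three ways in which the evaluations of the ranker `r` on `u` and `v`, ending in `p` and
`p'`, can be related to pivot positions `q` and `q'`: both end in the pivot, or a common suffix of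
`r` is evaluated entirely to the left, or entirely to the right, of the pivots. -/
inductive PivotOutcome (r : List (RLetter α)) (u : S → Option α) (i j p q : S) (v : T → Option α)
    (i' j' p' q' : T) : Prop
  | hit (h : p = q) (h' : p' = q')
  | left (s : List (RLetter α)) (hs : s <:+ r) (hsr : s = r ∨ startsY s) (h : Reaches u s i q p)
      (h' : Reaches v s i' q' p')
  | right (s : List (RLetter α)) (hs : s <:+ r) (hsr : s = r ∨ startsX s) (h : Reaches u s q j p)
      (h' : Reaches v s q' j' p')

theorem PivotOutcome.dual (h : PivotOutcome r u i j p q v i' j' p' q') :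
    PivotOutcome (r.map RLetter.flip) (u ∘ ofDual) (toDual j) (toDual i) (toDual p) (toDual q)
      (v ∘ ofDual) (toDual j') (toDual i') (toDual p') (toDual q') := by
  cases h with
  | hit h h' => exact .hit h h'
  | left s hs hsr h h' =>
    exact .right _ (hs.map _) (hsr.imp (congrArg _) startsX_map_flip.2) h.dual h'.dual
  | right s hs hsr h h' =>
    exact .left _ (hs.map _) (hsr.imp (congrArg _) startsY_map_flip.2) h.dual h'.dual

theorem pivotOutcome_dual :
    PivotOutcome (r.map RLetter.flip) (u ∘ ofDual) (toDual j) (toDual i) (toDual p) (toDual q)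
      (v ∘ ofDual) (toDual j') (toDual i') (toDual p') (toDual q') ↔
      PivotOutcome r u i j p q v i' j' p' q' :=
  ⟨fun h ↦ map_flip_map_flip r ▸ h.dual, PivotOutcome.dual⟩

theorem PivotOutcome.cons_of_startsX (hx : IsStep u i q z x) (hx' : IsStep v i' q' z x')
    (ht : startsX t) (h : PivotOutcome t u x j p q v x' j' p' q') :
    PivotOutcome (z :: t) u i j p q v i' j' p' q' := by
  cases h with
  | hit h h' => exact .hit h h'
  | left s hs hsr h h' =>
    rcases hsr with rfl | hsY
    · exact .left _ List.suffix_rfl (.inl rfl) (.right hx ht h) (.right hx' ht h')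
    · exact .left s (hs.trans (List.suffix_cons z t)) (.inr hsY)
        (h.extend_left hsY hx.mem_Ioo.1.le) (h'.extend_left hsY hx'.mem_Ioo.1.le)
  | right s hs hsr h h' =>
    exact .right s (hs.trans (List.suffix_cons z t)) (.inr (hsr.elim (· ▸ ht) id)) h h'

theorem PivotOutcome.cons_of_lt (hx : IsStep u i j z x) (hx' : IsStep v i' j' z x')
    (hxq : x < q) (hxq' : x' < q') (hqj : q ≤ j) (hqj' : q' ≤ j')
    (h : Reaches u (z :: t) i j p) (h' : Reaches v (z :: t) i' j' p')
    (ht : startsX t → Reaches u t x j p → Reaches v t x' j' p' →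
      PivotOutcome t u x j p q v x' j' p' q') :
    PivotOutcome (z :: t) u i j p q v i' j' p' q' := by
  by_cases htX : startsX t
  · exact .cons_of_startsX (hx.restrict_right hqj hxq) (hx'.restrict_right hqj' hxq') htX
      (ht htX ((hx.reaches_cons_iff_of_startsX htX).1 h)
        ((hx'.reaches_cons_iff_of_startsX htX).1 h'))
  · exact .left _ List.suffix_rfl (.inl rfl) (h.restrict_right htX hx hxq hqj)
      (h'.restrict_right htX hx' hxq' hqj')

theorem PivotOutcome.cons_of_gt (hx : IsStep u i j z x) (hx' : IsStep v i' j' z x')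
    (hqx : q < x) (hqx' : q' < x') (hiq : i ≤ q) (hiq' : i' ≤ q')
    (h : Reaches u (z :: t) i j p) (h' : Reaches v (z :: t) i' j' p')
    (ht : startsY t → Reaches u t i x p → Reaches v t i' x' p' →
      PivotOutcome t u i x p q v i' x' p' q') :
    PivotOutcome (z :: t) u i j p q v i' j' p' q' :=
  pivotOutcome_dual.1 <| .cons_of_lt (isStep_dual.2 hx) (isStep_dual.2 hx')
    (toDual_lt_toDual.2 hqx) (toDual_lt_toDual.2 hqx') (toDual_le_toDual.2 hiq)
    (toDual_le_toDual.2 hiq') h.dual h'.dual fun hY h h' ↦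
      (ht (startsX_map_flip.1 hY) (reaches_dual.1 h) (reaches_dual.1 h')).dual

theorem PivotOutcome.cons_of_eq (hx : IsStep u i j z x) (hx' : IsStep v i' j' z x')
    (h : Reaches u (z :: t) i j p) (h' : Reaches v (z :: t) i' j' p') :
    PivotOutcome (z :: t) u i j p x v i' j' p' x' := by
  rcases eq_nil_or_startsX_or_startsY t with rfl | ht | ht
  · exact .hit ((reaches_singleton_iff.1 h).unique hx) ((reaches_singleton_iff.1 h').unique hx')
  · exact .right t (List.suffix_cons z t) (.inr ht) ((hx.reaches_cons_iff_of_startsX ht).1 h)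
      ((hx'.reaches_cons_iff_of_startsX ht).1 h')
  · exact .left t (List.suffix_cons z t) (.inr ht) ((hx.reaches_cons_iff_of_startsY ht).1 h)
      ((hx'.reaches_cons_iff_of_startsY ht).1 h')

section LocallyFinite

variable [LocallyFiniteOrder S] [LocallyFiniteOrder T]

theorem AgreeOn.occ_nonempty_iff (h : AgreeOn R u i j v i' j') (hz : [z] ∈ R) :
    (occ u i j z.letter).Nonempty ↔ (occ v i' j' z.letter).Nonempty := by
  rw [← condensedIn_singleton_iff, ← condensedIn_singleton_iff, h _ hz]

theorem IsStep.cmp_eq_cmp (hq : q ∈ Ioo i j) (hq' : q' ∈ Ioo i' j') (huv : u q = v q')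
    (hl : AgreeOn (boundedRankers 1 0 1) u i q v i' q')
    (hr : AgreeOn (boundedRankers 0 1 1) u q j v q' j')
    (hx : IsStep u i j z x) (hx' : IsStep v i' j' z x') : cmp x q = cmp x' q' := by
  cases z with
  | X a =>
    exact cmp_eq_cmp_of_X hq hq' huv (hl.occ_nonempty_iff (X_mem_boundedRankers a)) hx hx'
  | Y a =>
    rw [cmp_eq_cmp_symm, ← cmp_toDual, ← cmp_toDual x']
    exact cmp_eq_cmp_of_X (a := a) hq.symm hq'.symm huv
      (hr.dual.occ_nonempty_iff (X_mem_boundedRankers a)) (isStep_dual.2 hx) (isStep_dual.2 hx')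

theorem AgreeOn.right_of_isStep (hc : 2 ≤ c ∨ z :: t ∈ boundedRankers 2 1 (k + 1))
    (ht : startsX t) (h : AgreeOn (boundedRankers 1 c (k + 1)) u i j v i' j')
    (hx : IsStep u i j z x) (hx' : IsStep v i' j' z x') :
    AgreeOn (boundedRankers 1 c k) u x j v x' j' := by
  cases z with
  | X a => exact h.right_of_X hx hx'
  | Y a =>
    have hc2 : 2 ≤ c := hc.resolve_right fun hY ↦ by
      have := one_le_numBlocks ht.ne_nil
      rw [mem_boundedRankers_of_startsY (startsY_cons_Y a t),
        numBlocks_cons_Y_of_startsX a ht] at hY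
      omega
    obtain ⟨c, rfl⟩ := Nat.exists_eq_add_of_le' (one_le_two.trans hc2)
    have hc1 : 1 ≤ c := by omega
    exact (h.right_of_Y hc1 hx hx').mono (boundedRankers_mono hc1 le_rfl le_rfl)

theorem AgreeOn.left_of_isStep (hb : 2 ≤ b ∨ z :: t ∈ boundedRankers 1 2 (k + 1))
    (ht : startsY t) (h : AgreeOn (boundedRankers b 1 (k + 1)) u i j v i' j')
    (hx : IsStep u i j z x) (hx' : IsStep v i' j' z x') :
    AgreeOn (boundedRankers b 1 k) u i x v i' x' :=
  agreeOn_dual.1 (h.dual.right_of_isStep (hb.imp_right (map_flip_mem_boundedRankers.2 ·))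
    (startsX_map_flip.2 ht) (isStep_dual.2 hx) (isStep_dual.2 hx'))

theorem pivotOutcome_of_agreeOn (hrk : r.length ≤ k)
    (hb : 2 ≤ b ∨ r ∈ boundedRankers 1 2 k) (hc : 2 ≤ c ∨ r ∈ boundedRankers 2 1 k)
    (hq : q ∈ Ioo i j) (hq' : q' ∈ Ioo i' j') (huv : u q = v q')
    (hl : AgreeOn (boundedRankers 1 c k) u i q v i' q')
    (hr : AgreeOn (boundedRankers b 1 k) u q j v q' j')
    (h : Reaches u r i j p) (h' : Reaches v r i' j' p') :
    PivotOutcome r u i j p q v i' j' p' q' := by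
  induction r generalizing i j i' j' k with
  | nil => exact absurd rfl h.ne_nil
  | cons z t ih =>
    obtain ⟨k, rfl⟩ := Nat.exists_eq_add_of_le' ((Nat.succ_pos _).trans_le hrk)
    obtain ⟨x, hx⟩ := h.exists_isStep
    obtain ⟨x', hx'⟩ := h'.exists_isStep
    have hcmp : cmp x q = cmp x' q' := IsStep.cmp_eq_cmp hq hq' huv
      (hl.mono (boundedRankers_mono le_rfl c.zero_le (by omega)))
      (hr.mono (boundedRankers_mono b.zero_le le_rfl (by omega))) hx hx'
    have hbt (ht : t ≠ []) : 2 ≤ b ∨ t ∈ boundedRankers 1 2 k :=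
      hb.imp_right (mem_boundedRankers_of_cons (by omega) (by omega) ht)
    have hct (ht : t ≠ []) : 2 ≤ c ∨ t ∈ boundedRankers 2 1 k :=
      hc.imp_right (mem_boundedRankers_of_cons (by omega) (by omega) ht)
    have htk : t.length ≤ k := Nat.succ_le_succ_iff.1 hrk
    rcases lt_trichotomy x q with hxq | rfl | hqx
    · have hxq' := (lt_iff_lt_of_cmp_eq_cmp hcmp).1 hxq
      refine .cons_of_lt hx hx' hxq hxq' hq.2.le hq'.2.le h h' fun ht ↦
        ih htk (hbt ht.ne_nil) (hct ht.ne_nil) ⟨hxq, hq.2⟩ ⟨hxq', hq'.2⟩ ?_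
          (hr.mono (boundedRankers_mono le_rfl le_rfl k.le_succ))
      exact hl.right_of_isStep hc ht (hx.restrict_right hq.2.le hxq)
        (hx'.restrict_right hq'.2.le hxq')
    · obtain rfl := (eq_iff_eq_of_cmp_eq_cmp hcmp).1 rfl
      exact .cons_of_eq hx hx' h h'
    · have hqx' := (lt_iff_lt_of_cmp_eq_cmp (cmp_eq_cmp_symm.1 hcmp)).1 hqx
      refine .cons_of_gt hx hx' hqx hqx' hq.1.le hq'.1.le h h' fun ht ↦
        ih htk (hbt ht.ne_nil) (hct ht.ne_nil) ⟨hq.1, hqx⟩ ⟨hq'.1, hqx'⟩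
          (hl.mono (boundedRankers_mono le_rfl le_rfl k.le_succ)) ?_
      exact hr.left_of_isStep hb ht (hx.restrict_left hq.1.le hqx)
        (hx'.restrict_left hq'.1.le hqx')

end LocallyFinite

end Agreement

section Comparison

open OrderDual Set

variable {α S T : Type*} [LinearOrder S] [LinearOrder T] {u : S → Option α} {v : T → Option α}
  {i j x p q : S} {i' j' x' p' q' : T} {a d : α} {z : RLetter α} {r s t : List (RLetter α)}
  {e k m : ℕ}

/-- The pairs of rankers whose relative position is determined by the condensed rankers with at
most `m + 1` blocks: both have at most `m` blocks, and one of them has fewer than `m` blocks or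
they end in opposite directions. -/
def IsComparable (m : ℕ) (r s : List (RLetter α)) : Prop :=
  numBlocks r ≤ m ∧ numBlocks s ≤ m ∧
    (numBlocks r < m ∨ numBlocks s < m ∨ endsX r ∧ endsY s ∨ endsY r ∧ endsX s)

theorem IsComparable.symm (h : IsComparable m r s) : IsComparable m s r := by
  unfold IsComparable at *; tauto

theorem IsComparable.map_flip (h : IsComparable m r s) :
    IsComparable m (r.map RLetter.flip) (s.map RLetter.flip) := by
  simp only [IsComparable, numBlocks_map_flip, endsX_map_flip, endsY_map_flip] at *; tauto

theorem IsComparable.of_suffix_add {r' s' : List (RLetter α)} (h : IsComparable (m + e) r s)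
    (hr : r' <:+ r) (hs : s' <:+ s) (hr' : r' ≠ []) (hs' : s' ≠ [])
    (hre : numBlocks r' + e ≤ numBlocks r) (hse : numBlocks s' + e ≤ numBlocks s) :
    IsComparable m r' s' := by
  obtain ⟨hrm, hsm, h⟩ := h
  refine ⟨by omega, by omega, ?_⟩
  rw [endsX_congr_of_suffix hr hr', endsY_congr_of_suffix hr hr', endsX_congr_of_suffix hs hs',
    endsY_congr_of_suffix hs hs']
  exact h.imp (by omega) (.imp_left (by omega))

theorem IsComparable.two_le_of_startsY (h : IsComparable m r s) (hr : startsY r)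
    (hs : startsY s) : 2 ≤ m := by
  have hr1 := one_le_numBlocks hr.ne_nil
  have hs1 := one_le_numBlocks hs.ne_nil
  by_contra! hm
  have hrY := endsY_of_startsY_of_numBlocks_le_one hr (by have := h.1; omega)
  have hsY := endsY_of_startsY_of_numBlocks_le_one hs (by have := h.2.1; omega)
  rcases h with ⟨-, -, h | h | ⟨h, -⟩ | ⟨-, h⟩⟩
  · omega
  · omega
  · exact h.not_endsY hrY
  · exact h.not_endsY hsY

/-- Agreement of `u` and `v` on condensed rankers of depth at most `k` determines the relative
position of comparable rankers of total depth at most `k`; the induction on `k` needs this for all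
intervals and for the reversed words. -/
def DeterminesOrder (k : ℕ) (u : S → Option α) (v : T → Option α) : Prop :=
  ∀ ⦃m : ℕ⦄ ⦃i j p q : S⦄ ⦃i' j' p' q' : T⦄ ⦃r s : List (RLetter α)⦄,
    AgreeOn (boundedRankers (m + 1) m k) u i j v i' j' → r.length + s.length ≤ k →
    IsComparable m r s → Reaches u r i j p → Reaches v r i' j' p' → Reaches u s i j q →
    Reaches v s i' j' q' → cmp p q = cmp p' q'

theorem DeterminesOrder.cmp_eq_cmp_of_dual (ih : DeterminesOrder k (u ∘ ofDual) (v ∘ ofDual))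
    (h : AgreeOn (boundedRankers m (m + 1) k) u i j v i' j') (hk : r.length + s.length ≤ k)
    (hrs : IsComparable m r s) (hp : Reaches u r i j p) (hp' : Reaches v r i' j' p')
    (hq : Reaches u s i j q) (hq' : Reaches v s i' j' q') : cmp p q = cmp p' q' := by
  rw [cmp_eq_cmp_symm, ← cmp_toDual, ← cmp_toDual p']
  exact ih h.dual (by simpa using hk) hrs.map_flip hp.dual hp'.dual hq.dual hq'.dual

theorem PivotOutcome.cmp_eq_cmp (h : PivotOutcome s u i j q x v i' j' q' x')
    (hx : IsStep u i j z x) (hx' : IsStep v i' j' z x')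
    (hp : Reaches u (z :: t) i j p) (hp' : Reaches v (z :: t) i' j' p')
    (hleft : ∀ s', s' <:+ s → startsY t → Reaches u t i x p → Reaches v t i' x' p' →
      Reaches u s' i x q → Reaches v s' i' x' q' → cmp p q = cmp p' q')
    (hright : ∀ s', s' <:+ s → (s' = s ∨ startsX s') → startsX t → Reaches u t x j p →
      Reaches v t x' j' p' → Reaches u s' x j q → Reaches v s' x' j' q' → cmp p q = cmp p' q') :
    cmp p q = cmp p' q' := by
  have of_lt (h : p < q) (h' : p' < q') : cmp p q = cmp p' q' := by
    rw [h.cmp_eq_lt, h'.cmp_eq_lt]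
  have of_gt (h : q < p) (h' : q' < p') : cmp p q = cmp p' q' := by
    rw [h.cmp_eq_gt, h'.cmp_eq_gt]
  rcases eq_nil_or_startsX_or_startsY t with rfl | ht | ht
  · obtain rfl := (reaches_singleton_iff.1 hp).unique hx
    obtain rfl := (reaches_singleton_iff.1 hp').unique hx'
    cases h with
    | hit h h' => rw [h, h', cmp_self_eq_eq, cmp_self_eq_eq]
    | left _ _ _ h h' => exact of_gt h.mem_Ioo.2 h'.mem_Ioo.2
    | right _ _ _ h h' => exact of_lt h.mem_Ioo.1 h'.mem_Ioo.1
  · rw [hx.reaches_cons_iff_of_startsX ht] at hp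
    rw [hx'.reaches_cons_iff_of_startsX ht] at hp'
    cases h with
    | hit h h' => exact of_gt (h.trans_lt hp.mem_Ioo.1) (h'.trans_lt hp'.mem_Ioo.1)
    | left _ _ _ h h' =>
      exact of_gt (h.mem_Ioo.2.trans hp.mem_Ioo.1) (h'.mem_Ioo.2.trans hp'.mem_Ioo.1)
    | right s' hs hss h h' => exact hright s' hs hss ht hp hp' h h'
  · rw [hx.reaches_cons_iff_of_startsY ht] at hp
    rw [hx'.reaches_cons_iff_of_startsY ht] at hp'
    cases h with
    | hit h h' => exact of_lt (hp.mem_Ioo.2.trans_eq h.symm) (hp'.mem_Ioo.2.trans_eq h'.symm)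
    | left s' hs _ h h' => exact hleft s' hs ht hp hp' h h'
    | right _ _ _ h h' =>
      exact of_lt (hp.mem_Ioo.2.trans h.mem_Ioo.1) (hp'.mem_Ioo.2.trans h'.mem_Ioo.1)

variable [LocallyFiniteOrder S] [LocallyFiniteOrder T]

theorem DeterminesOrder.cmp_eq_cmp_of_X (ih : DeterminesOrder k u v)
    (h : AgreeOn (boundedRankers (m + 1) m (k + 1)) u i j v i' j')
    (hk : (RLetter.X a :: t).length + s.length ≤ k + 1) (hrs : IsComparable m (.X a :: t) s)
    (hp : Reaches u (.X a :: t) i j p) (hp' : Reaches v (.X a :: t) i' j' p')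
    (hq : Reaches u s i j q) (hq' : Reaches v s i' j' q') : cmp p q = cmp p' q' := by
  obtain ⟨x, hx⟩ := hp.exists_isStep
  obtain ⟨x', hx'⟩ := hp'.exists_isStep
  have hm : 1 ≤ m := (one_le_numBlocks (List.cons_ne_nil _ _)).trans hrs.1
  have hl := h.left_of_X hm hx hx'
  have hr := h.right_of_X hx hx'
  have hlen : t.length + s.length ≤ k := by rw [List.length_cons] at hk; omega
  have hcomp {s'} (hs : s' <:+ s) (ht : t ≠ []) (hs' : s' ≠ []) : IsComparable m t s' :=
    hrs.of_suffix_add (e := 0) (List.suffix_cons _ _) hs ht hs'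
      (numBlocks_le_of_suffix (List.suffix_cons _ _)) (numBlocks_le_of_suffix hs)
  have hc : 2 ≤ m ∨ s ∈ boundedRankers 2 1 k := by
    refine hm.lt_or_eq.imp id fun hm ↦ boundedRankers_mono one_le_two le_rfl le_rfl ?_
    exact mem_boundedRankers_self hq.ne_nil (by omega) (hrs.2.1.trans_eq hm.symm)
  have hpivot := pivotOutcome_of_agreeOn (b := m + 1) (by omega) (.inl (by omega)) hc
    hx.mem_Ioo hx'.mem_Ioo (hx.mem_occ.2.trans hx'.mem_occ.2.symm)
    (hl.mono (boundedRankers_mono (by omega) le_rfl le_rfl))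
    (hr.mono (boundedRankers_mono le_rfl hm le_rfl)) hq hq'
  refine hpivot.cmp_eq_cmp hx hx' hp hp' ?_ ?_
  · intro s' hs ht hp hp' hq hq'
    have := hs.length_le
    exact ih hl (by omega) (hcomp hs ht.ne_nil hq.ne_nil) hp hp' hq hq'
  · intro s' hs _ ht hp hp' hq hq'
    have := hs.length_le
    exact ih hr (by omega) (hcomp hs ht.ne_nil hq.ne_nil) hp hp' hq hq'

/- A block is lost on passing to the right of `x`. Both rankers then enter their second block, since
`y ≤ x` prevents `Y_d` from being evaluated there. -/
theorem DeterminesOrder.cmp_eq_cmp_of_Y_of_le {y : S} (ih : DeterminesOrder k u v)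
    (ih_dual : DeterminesOrder k (u ∘ ofDual) (v ∘ ofDual))
    (h : AgreeOn (boundedRankers (m + 1) m (k + 1)) u i j v i' j')
    (hk : (RLetter.Y a :: t).length + (RLetter.Y d :: s).length ≤ k + 1)
    (hrs : IsComparable m (.Y a :: t) (.Y d :: s))
    (hx : IsStep u i j (.Y a) x) (hy : IsStep u i j (.Y d) y) (hyx : y ≤ x)
    (hp : Reaches u (.Y a :: t) i j p) (hp' : Reaches v (.Y a :: t) i' j' p')
    (hq : Reaches u (.Y d :: s) i j q) (hq' : Reaches v (.Y d :: s) i' j' q') :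
    cmp p q = cmp p' q' := by
  obtain ⟨x', hx'⟩ := hp'.exists_isStep
  have hm := hrs.two_le_of_startsY (startsY_cons_Y a t) (startsY_cons_Y d s)
  obtain ⟨m, rfl⟩ := Nat.exists_eq_add_of_le' (one_le_two.trans hm)
  have hm1 : 1 ≤ m := by omega
  have hl := h.left_of_Y hx hx'
  have hr := h.right_of_Y hm1 hx hx'
  have hlen : t.length + (RLetter.Y d :: s).length ≤ k := by
    rw [List.length_cons] at hk; omega
  have hb : 2 ≤ m ∨ .Y d :: s ∈ boundedRankers 1 2 k := by
    refine hm1.lt_or_eq.imp id fun hm ↦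
      (mem_boundedRankers_of_startsY (startsY_cons_Y d s)).2 ⟨by omega, ?_⟩
    exact hrs.2.1.trans_eq (congrArg (· + 1) hm.symm)
  have hpivot := pivotOutcome_of_agreeOn (by omega) hb (.inl hm)
    hx.mem_Ioo hx'.mem_Ioo (hx.mem_occ.2.trans hx'.mem_occ.2.symm)
    (hl.mono (boundedRankers_mono (by omega) le_rfl le_rfl))
    (hr.mono (boundedRankers_mono le_rfl (by omega) le_rfl)) hq hq'
  refine hpivot.cmp_eq_cmp hx hx' hp hp' ?_ ?_
  · intro s' hs ht hp hp' hq hq'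
    have := hs.length_le
    refine ih hl (by omega) ?_ hp hp' hq hq'
    exact hrs.of_suffix_add (e := 0) (List.suffix_cons _ _) hs ht.ne_nil hq.ne_nil
      (numBlocks_le_of_suffix (List.suffix_cons _ _)) (numBlocks_le_of_suffix hs)
  · intro s' hs hss ht hp hp' hq hq'
    have hsX : startsX s' := hss.resolve_left fun hss ↦ by
      obtain ⟨w, hw⟩ := (hss ▸ hq).exists_isStep
      have hwy : w ≤ y := hy.2 ⟨⟨hx.mem_Ioo.1.trans hw.mem_Ioo.1, hw.mem_Ioo.2⟩, hw.mem_occ.2⟩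
      exact (hw.mem_Ioo.1.trans_le hwy).not_ge hyx
    have := hs.length_le
    refine ih_dual.cmp_eq_cmp_of_dual hr (by omega) ?_ hp hp' hq hq'
    exact hrs.of_suffix_add (e := 1) (List.suffix_cons _ _) hs ht.ne_nil hq.ne_nil
      (numBlocks_lt_of_suffix_of_startsX ht (startsY_cons_Y a t) (List.suffix_cons _ _))
      (numBlocks_lt_of_suffix_of_startsX hsX (startsY_cons_Y d s) hs)

theorem DeterminesOrder.succ (ih : DeterminesOrder k u v)
    (ih_dual : DeterminesOrder k (u ∘ ofDual) (v ∘ ofDual)) : DeterminesOrder (k + 1) u v := by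
  intro m i j p q i' j' p' q' r s h hk hrs hp hp' hq hq'
  have hk' : s.length + r.length ≤ k + 1 := by omega
  rcases eq_nil_or_startsX_or_startsY r with rfl | ⟨a, t, rfl⟩ | ⟨a, t, rfl⟩
  · exact absurd rfl hp.ne_nil
  · exact ih.cmp_eq_cmp_of_X h hk hrs hp hp' hq hq'
  rcases eq_nil_or_startsX_or_startsY s with rfl | ⟨d, s, rfl⟩ | ⟨d, s, rfl⟩
  · exact absurd rfl hq.ne_nil
  · exact cmp_eq_cmp_symm.1 (ih.cmp_eq_cmp_of_X h hk' hrs.symm hq hq' hp hp')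
  obtain ⟨x, hx⟩ := hp.exists_isStep
  obtain ⟨y, hy⟩ := hq.exists_isStep
  rcases le_total y x with hyx | hxy
  · exact ih.cmp_eq_cmp_of_Y_of_le ih_dual h hk hrs hx hy hyx hp hp' hq hq'
  · exact cmp_eq_cmp_symm.1
      (ih.cmp_eq_cmp_of_Y_of_le ih_dual h hk' hrs.symm hy hx hxy hq hq' hp hp')

theorem determinesOrder (k : ℕ) (u : S → Option α) (v : T → Option α) :
    DeterminesOrder k u v := by
  induction k generalizing S T with
  | zero =>
    intro m i j p q i' j' p' q' r s _ hk _ hp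
    have := List.length_pos_of_ne_nil hp.ne_nil
    omega
  | succ k ih => exact (ih u v).succ (ih _ _)

theorem cmp_eq_cmp_of_agreeOn
    (h : AgreeOn (boundedRankers (m + 1) m k) u i j v i' j' ∨
      AgreeOn (boundedRankers m (m + 1) k) u i j v i' j')
    (hk : r.length + s.length ≤ k) (hrs : IsComparable m r s)
    (hp : Reaches u r i j p) (hp' : Reaches v r i' j' p')
    (hq : Reaches u s i j q) (hq' : Reaches v s i' j' q') : cmp p q = cmp p' q' := by
  rcases h with h | h
  · exact determinesOrder k u v h hk hrs hp hp' hq hq'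
  · exact (determinesOrder k _ _).cmp_eq_cmp_of_dual h hk hrs hp hp' hq hq'

end Comparison

section Words

open Set

variable {u : List A} {a : A} {z w : RLetter A} {r t : List (RLetter A)} {i j p q x : ℕ}
  {I : ℕ → ℕ × ℕ}

theorem head?_eq_some_iff_isLeast {β : Type*} [PartialOrder β] {l : List β}
    (hl : l.Pairwise (· ≤ ·)) {x : β} : l.head? = some x ↔ IsLeast {y | y ∈ l} x := by
  cases l with
  | nil => simp [IsLeast]
  | cons b l =>
    have hb : IsLeast {y | y ∈ b :: l} b :=
      ⟨List.mem_cons_self, List.forall_mem_cons.2 ⟨le_rfl, (List.pairwise_cons.1 hl).1⟩⟩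
    exact ⟨fun h ↦ Option.some.inj h ▸ hb, fun h ↦ congrArg some (hb.unique h)⟩

theorem getLast?_eq_some_iff_isGreatest {β : Type*} [PartialOrder β] {l : List β}
    (hl : l.Pairwise (· ≤ ·)) {x : β} : l.getLast? = some x ↔ IsGreatest {y | y ∈ l} x := by
  have hmem : {y | y ∈ l} = {y | y ∈ l.reverse} := by simp only [List.mem_reverse]
  rw [← List.head?_reverse, hmem]
  exact head?_eq_some_iff_isLeast (β := βᵒᵈ) (List.pairwise_reverse.2 hl)

/-- The letter of `u` at the 1-indexed position `x`. Like `nextOcc` this sends `0` to the first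
letter, so that it is only meaningful on intervals `(i, j)`, which do not contain `0`. -/
def letterAt {α : Type*} (u : List α) (x : ℕ) : Option α := u[x - 1]?

theorem lt_length_add_two_of_letterAt {α : Type*} {u : List α} {a : α}
    (hx : letterAt u x = some a) : x < u.length + 2 := by
  have := (List.getElem?_eq_some_iff.1 hx).1
  omega

theorem nextOcc_eq_some_iff :
    nextOcc u a q = some x ↔ IsLeast {y | q < y ∧ letterAt u y = some a} x := by
  rw [nextOcc, head?_eq_some_iff_isLeast (List.pairwise_le_range.filter _)]
  congr! 2
  ext y
  simp only [List.mem_filter, List.mem_range, decide_eq_true_eq]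
  exact and_iff_right_of_imp fun h ↦ lt_length_add_two_of_letterAt h.2

theorem prevOcc_eq_some_iff :
    prevOcc u a q = some x ↔ IsGreatest {y | 1 ≤ y ∧ y < q ∧ letterAt u y = some a} x := by
  rw [prevOcc, getLast?_eq_some_iff_isGreatest (List.pairwise_le_range.filter _)]
  congr! 2
  ext y
  simp only [List.mem_filter, List.mem_range, decide_eq_true_eq]
  exact and_iff_right_of_imp fun h ↦ lt_length_add_two_of_letterAt h.2.2

/-- The end of the interval `I` at which the evaluation of a ranker letter starts. -/
def RLetter.origin (I : ℕ × ℕ) : RLetter A → ℕ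
  | .X _ => I.1
  | .Y _ => I.2

theorem isStep_letterAt_iff :
    IsStep (letterAt u) i j z x ↔ stepR u z (z.origin (i, j)) = some x ∧ x ∈ Ioo i j := by
  cases z with
  | X a =>
    rw [stepR, nextOcc_eq_some_iff]
    refine ⟨fun h ↦ ⟨⟨⟨h.mem_Ioo.1, h.mem_occ.2⟩, fun y hy ↦ ?_⟩, h.mem_Ioo⟩,
      fun ⟨h, hx⟩ ↦ ⟨⟨hx, h.1.2⟩, fun y hy ↦ h.2 ⟨hy.1.1, hy.2⟩⟩⟩
    exact (lt_or_ge y j).elim (fun hyj ↦ h.2 ⟨⟨hy.1, hyj⟩, hy.2⟩) h.mem_Ioo.2.le.trans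
  | Y a =>
    rw [stepR, prevOcc_eq_some_iff]
    refine ⟨fun h ↦ ⟨⟨⟨i.zero_le.trans_lt h.mem_Ioo.1, h.mem_Ioo.2, h.mem_occ.2⟩,
        fun y hy ↦ ?_⟩, h.mem_Ioo⟩,
      fun ⟨h, hx⟩ ↦ ⟨⟨hx, h.1.2.2⟩, fun y hy ↦ h.2 ⟨i.zero_le.trans_lt hy.1.1, hy.1.2, hy.2⟩⟩⟩
    exact (lt_or_ge i y).elim (fun hiy ↦ h.2 ⟨⟨hiy, hy.2.1⟩, hy.2.2⟩) (·.trans h.mem_Ioo.1.le)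

/-- `Narrows u z w I J` means that evaluating the letter `z` on the interval `I` before the letter
`w` replaces `I` by `J`; this unifies the four interval updates of a condensed ranker. -/
def Narrows (u : List A) (z : RLetter A) : RLetter A → ℕ × ℕ → ℕ × ℕ → Prop
  | .X _, I, J => stepR u z (z.origin I) = some J.1 ∧ J.2 = I.2
  | .Y _, I, J => J.1 = I.1 ∧ stepR u z (z.origin I) = some J.2

/-- `J` is a proper subinterval of `I`. -/
def IsProperSubinterval (J I : ℕ × ℕ) : Prop :=
  I.1 ≤ J.1 ∧ J.2 ≤ I.2 ∧ (I.1 < J.1 ∨ J.2 < I.2)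

/-- The chain of intervals `I 0 ⊃ I 1 ⊃ ⋯` witnesses that the ranker `r` is condensed on `u` and
leads to `p`. -/
structure IsChain (u : List A) (r : List (RLetter A)) (p : ℕ) (I : ℕ → ℕ × ℕ) : Prop where
  narrows : ∀ ℓ z w, r[ℓ]? = some z → r[ℓ + 1]? = some w → Narrows u z w (I ℓ) (I (ℓ + 1))
  nested : ∀ ℓ, ℓ + 1 < r.length → IsProperSubinterval (I (ℓ + 1)) (I ℓ)
  mem : p ∈ Ioo (I (r.length - 1)).1 (I (r.length - 1)).2

theorem condensed_iff_exists_isChain :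
    Condensed u r ↔ ∃ p I, evalR u r = some p ∧ I 0 = (0, u.length + 1) ∧ IsChain u r p I := by
  constructor
  · rintro ⟨p, i, j, hp, hi, hj, hXX, hYY, hXY, hYX, hnested, hmem⟩
    refine ⟨p, fun ℓ ↦ (i ℓ, j ℓ), hp, Prod.ext hi hj, ?_, fun ℓ hℓ ↦ ?_, hmem⟩
    · rintro ℓ (a | a) (b | b) hz hw
      · exact hXX (ℓ + 1) a b ℓ.succ_pos hz hw
      · exact hXY (ℓ + 1) a b ℓ.succ_pos hz hw
      · exact hYX (ℓ + 1) a b ℓ.succ_pos hz hw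
      · exact hYY (ℓ + 1) a b ℓ.succ_pos hz hw
    · exact hnested (ℓ + 1) ℓ.succ_pos hℓ
  · rintro ⟨p, I, hp, hI, h⟩
    refine ⟨p, fun ℓ ↦ (I ℓ).1, fun ℓ ↦ (I ℓ).2, hp, congrArg Prod.fst hI, congrArg Prod.snd hI,
      ?_, ?_, ?_, ?_, ?_, h.mem⟩
    · rintro (_ | ℓ) a b hℓ hz hw
      exacts [absurd hℓ (by simp), h.narrows ℓ _ _ hz hw]
    · rintro (_ | ℓ) a b hℓ hz hw
      exacts [absurd hℓ (by simp), h.narrows ℓ _ _ hz hw]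
    · rintro (_ | ℓ) a b hℓ hz hw
      exacts [absurd hℓ (by simp), h.narrows ℓ _ _ hz hw]
    · rintro (_ | ℓ) a b hℓ hz hw
      exacts [absurd hℓ (by simp), h.narrows ℓ _ _ hz hw]
    · rintro (_ | ℓ) hℓ hℓr
      exacts [absurd hℓ (by simp), h.nested ℓ hℓr]

theorem isChain_singleton_iff : IsChain u [z] p I ↔ p ∈ Ioo (I 0).1 (I 0).2 :=
  ⟨fun h ↦ h.mem, fun h ↦ ⟨by simp, by simp, h⟩⟩

theorem isChain_cons_cons_iff :
    IsChain u (z :: w :: t) p I ↔ Narrows u z w (I 0) (I 1) ∧ IsProperSubinterval (I 1) (I 0) ∧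
      IsChain u (w :: t) p fun ℓ ↦ I (ℓ + 1) := by
  refine ⟨fun h ↦ ⟨h.narrows 0 z w rfl rfl, h.nested 0 (by simp), fun ℓ ↦ h.narrows (ℓ + 1),
    fun ℓ hℓ ↦ h.nested (ℓ + 1) (Nat.succ_lt_succ hℓ), h.mem⟩, ?_⟩
  rintro ⟨hn, hs, h⟩
  refine ⟨?_, ?_, h.mem⟩
  · rintro (_ | ℓ) z' w' hz hw
    · cases hz
      cases hw
      exact hn
    · exact h.narrows ℓ z' w' hz hw
  · rintro (_ | ℓ) hℓ
    · exact hs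
    · exact h.nested ℓ (Nat.lt_of_succ_lt_succ hℓ)

theorem IsChain.reaches (h : IsChain u (z :: t) p I)
    (hp : evalFrom u (z :: t) (z.origin (I 0)) = some p) :
    Reaches (letterAt u) (z :: t) (I 0).1 (I 0).2 p := by
  induction t generalizing z I with
  | nil =>
    rw [evalFrom, Option.bind_eq_some_iff] at hp
    obtain ⟨x, hx, hxp⟩ := hp
    obtain rfl : x = p := Option.some.inj hxp
    exact .single (isStep_letterAt_iff.2 ⟨hx, isChain_singleton_iff.1 h⟩)
  | cons w t ih =>
    obtain ⟨hn, hs, hI⟩ := isChain_cons_cons_iff.1 h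
    rw [evalFrom, Option.bind_eq_some_iff] at hp
    obtain ⟨x, hx, hp⟩ := hp
    unfold IsProperSubinterval at hs
    cases w with
    | X b =>
      obtain ⟨hz, hj⟩ := hn
      obtain rfl := Option.some.inj (hx.symm.trans hz)
      have ht := ih hI hp
      have hx0 : (I 1).1 ∈ Ioo (I 0).1 (I 0).2 :=
        ⟨by omega, hj ▸ ht.mem_Ioo.1.trans ht.mem_Ioo.2⟩
      exact .right (isStep_letterAt_iff.2 ⟨hx, hx0⟩) (startsX_cons_X b t) (hj ▸ ht)
    | Y b =>
      obtain ⟨hi, hz⟩ := hn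
      obtain rfl := Option.some.inj (hx.symm.trans hz)
      have ht := ih hI hp
      have hx0 : (I 1).2 ∈ Ioo (I 0).1 (I 0).2 :=
        ⟨hi ▸ ht.mem_Ioo.1.trans ht.mem_Ioo.2, by omega⟩
      exact .left (isStep_letterAt_iff.2 ⟨hx, hx0⟩) (startsY_cons_Y b t) (hi ▸ ht)

theorem Reaches.evalFrom_eq_some (h : Reaches (letterAt u) (z :: t) i j p) :
    evalFrom u (z :: t) (z.origin (i, j)) = some p := by
  induction t generalizing z i j with
  | nil =>
    rw [evalFrom, (isStep_letterAt_iff.1 (reaches_singleton_iff.1 h)).1]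
    rfl
  | cons w t ih =>
    cases h with
    | right hx ht h =>
      obtain ⟨b, t, ⟨⟩⟩ := ht
      rw [evalFrom, (isStep_letterAt_iff.1 hx).1]
      exact ih h
    | left hx ht h =>
      obtain ⟨b, t, ⟨⟩⟩ := ht
      rw [evalFrom, (isStep_letterAt_iff.1 hx).1]
      exact ih h

theorem IsChain.exists_cons {J : ℕ × ℕ} (h : IsChain u (w :: t) p I)
    (hn : Narrows u z w J (I 0)) (hs : IsProperSubinterval (I 0) J) :
    ∃ I', I' 0 = J ∧ IsChain u (z :: w :: t) p I' :=
  ⟨fun ℓ ↦ ℓ.casesOn J I, rfl, isChain_cons_cons_iff.2 ⟨hn, hs, h⟩⟩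

theorem Reaches.exists_isChain (h : Reaches (letterAt u) r i j p) :
    ∃ I, I 0 = (i, j) ∧ IsChain u r p I := by
  induction h with
  | @single _ i j _ h => exact ⟨fun _ ↦ (i, j), rfl, isChain_singleton_iff.2 h.mem_Ioo⟩
  | right hx ht _ ih =>
    obtain ⟨b, t, rfl⟩ := ht
    obtain ⟨I, hI, h⟩ := ih
    refine h.exists_cons ?_ ?_ <;> rw [hI]
    · exact ⟨(isStep_letterAt_iff.1 hx).1, rfl⟩
    · exact ⟨hx.mem_Ioo.1.le, le_rfl, .inl hx.mem_Ioo.1⟩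
  | left hx ht _ ih =>
    obtain ⟨b, t, rfl⟩ := ht
    obtain ⟨I, hI, h⟩ := ih
    refine h.exists_cons ?_ ?_ <;> rw [hI]
    · exact ⟨rfl, (isStep_letterAt_iff.1 hx).1⟩
    · exact ⟨le_rfl, hx.mem_Ioo.2.le, .inr hx.mem_Ioo.2⟩

theorem evalR_cons : evalR u (z :: t) = evalFrom u (z :: t) (z.origin (0, u.length + 1)) := by
  cases z <;> rfl

theorem Condensed.reaches (h : Condensed u r) :
    Reaches (letterAt u) r 0 (u.length + 1) (pos u r) := by
  obtain ⟨p, I, hp, hI, h⟩ := condensed_iff_exists_isChain.1 h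
  rw [pos, hp]
  cases r with
  | nil => simp [evalR] at hp
  | cons z t =>
    rw [evalR_cons, ← hI] at hp
    have := h.reaches hp
    rwa [hI] at this

theorem condensed_iff_condensedIn :
    Condensed u r ↔ CondensedIn (letterAt u) r 0 (u.length + 1) := by
  refine ⟨fun h ↦ ⟨_, h.reaches⟩, fun ⟨p, hp⟩ ↦ condensed_iff_exists_isChain.2 ?_⟩
  obtain ⟨I, hI, h⟩ := hp.exists_isChain
  cases r with
  | nil => exact absurd rfl hp.ne_nil
  | cons z t => exact ⟨p, I, evalR_cons.trans hp.evalFrom_eq_some, hI, h⟩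

end Words

section Relations

variable {u v : List A} {r s : List (RLetter A)} {k m : ℕ}

theorem AgreeCond.agreeOn {P : List (RLetter A) → Prop} {R : Set (List (RLetter A))}
    (h : AgreeCond P u v) (hR : ∀ r ∈ R, P r) :
    AgreeOn R (letterAt u) 0 (u.length + 1) (letterAt v) 0 (v.length + 1) := by
  intro r hr
  rw [← condensed_iff_condensedIn, ← condensed_iff_condensedIn]
  exact h r (hR r hr)

theorem agreeOn_of_trir_or_tril (h : trir (m + 1) (k + 1) u v ∨ tril (m + 1) (k + 1) u v) :
    AgreeOn (boundedRankers (m + 1) m k) (letterAt u) 0 (u.length + 1) (letterAt v) 0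
        (v.length + 1) ∨
      AgreeOn (boundedRankers m (m + 1) k) (letterAt u) 0 (u.length + 1) (letterAt v) 0
        (v.length + 1) :=
  h.imp (·.agreeOn fun _ ↦ uRX_of_mem_boundedRankers) (·.agreeOn fun _ ↦ uRY_of_mem_boundedRankers)

theorem condensed_iff_of_mem_boundedRankers
    (h : trir (m + 1) (k + 1) u v ∨ tril (m + 1) (k + 1) u v) (hr : r ∈ boundedRankers m m k) :
    Condensed u r ↔ Condensed v r := by
  rw [condensed_iff_condensedIn, condensed_iff_condensedIn]
  exact (agreeOn_of_trir_or_tril h).elim (· r (boundedRankers_mono m.le_succ le_rfl le_rfl hr))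
    (· r (boundedRankers_mono le_rfl m.le_succ le_rfl hr))

theorem compare_pos_eq_compare_pos (h : trir (m + 1) (k + 1) u v ∨ tril (m + 1) (k + 1) u v)
    (hk : r.length + s.length ≤ k) (hrs : IsComparable m r s) (hr : Condensed u r)
    (hr' : Condensed v r) (hs : Condensed u s) (hs' : Condensed v s) :
    compare (pos u r) (pos u s) = compare (pos v r) (pos v s) := by
  rw [← cmp_eq_compare, ← cmp_eq_compare]
  exact cmp_eq_cmp_of_agreeOn (agreeOn_of_trir_or_tril h) hk hrs hr.reaches hr'.reaches hs.reaches
    hs'.reaches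

end Relations

/-- If `u ⊳_{m+1,2n} v` or `u ⊲_{m+1,2n} v`, then the conditions
(WI 1c), (WI 2c) and (WI 3c) hold for `m, n`. -/
theorem statement15 (m n : ℕ) (hm : 1 ≤ m) (hmn : m ≤ n) (u v : List A)
    (hrel : trir (m+1) (2*n) u v ∨ tril (m+1) (2*n) u v) :
    WI1c m n u v ∧ WI2c m n u v ∧ WI3c m n u v := by
  obtain ⟨k, hk⟩ : ∃ k, 2 * n = k + 1 := Nat.exists_eq_add_one.2 (by omega)
  rw [hk] at hrel
  have depth_add_le {m' : ℕ} {r r' : List (RLetter A)} (hr : uR m n r)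
      (hr' : uR m' (n - 1) r') : r.length + r'.length ≤ k := by
    have := hr.mem_boundedRankers.1
    have := hr'.mem_boundedRankers.1
    omega
  refine ⟨fun r hr ↦ ?_, fun r r' hr hr' ↦ ?_, fun r r' hr hr' hends ↦ ?_⟩
  · exact condensed_iff_of_mem_boundedRankers hrel
      (boundedRankers_mono le_rfl le_rfl (by omega) hr.mem_boundedRankers)
  · have hlt : numBlocks r' < m := hr'.numBlocks_le.trans_lt (by omega)
    exact compare_pos_eq_compare_pos hrel (depth_add_le hr hr')
      ⟨hr.numBlocks_le, hlt.le, .inr (.inl hlt)⟩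
  · exact compare_pos_eq_compare_pos hrel (depth_add_le hr hr')
      ⟨hr.numBlocks_le, hr'.numBlocks_le, .inr (.inr hends)⟩

end RankerPaper
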